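/- arXiv:1502.03085 — 3 statements merged into one kernel-verified Lean document; each statement's English description precedes it below -/
import Mathlib

section
/- For every positive integer m, the following identities of polynomials with rational coefficients hold: L_{2m+1}(x) = x·P_m(x²), L_{2m}(x) = Q_m(x²), F_{2m+1}(x) = 𝒫_m(x²), and F_{2m+2}(x) = x·𝒬_m(x²). -/
open Polynomial Finset

/-- `P_m(x) = Σ_{k=0}^{m} ((2m+1)/(2k+1))·binom(m+k,2k)·x^k`. -/
noncomputable def Ppoly (m : ℕ) : Polynomial ℚ :=
  ∑ k ∈ Finset.range (m + 1),
    Polynomial.C ((2 * m + 1 : ℚ) / (2 * k + 1) * (Nat.choose (m + k) (2 * k))) * Polynomial.X ^ k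

/-- `Q_m(x) = 2 + Σ_{k=1}^{m} (m/k)·binom(m+k−1,2k−1)·x^k`. -/
noncomputable def Qpoly (m : ℕ) : Polynomial ℚ :=
  Polynomial.C 2 + ∑ k ∈ Finset.Icc 1 m,
    Polynomial.C ((m : ℚ) / k * (Nat.choose (m + k - 1) (2 * k - 1))) * Polynomial.X ^ k

/-- `𝒫_m(x) = Σ_{k=0}^{m} binom(m+k,2k)·x^k`. -/
noncomputable def calP (m : ℕ) : Polynomial ℚ :=
  ∑ k ∈ Finset.range (m + 1),
    Polynomial.C ((Nat.choose (m + k) (2 * k) : ℚ)) * Polynomial.X ^ k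

/-- `𝒬_m(x) = Σ_{k=0}^{m} binom(m+k+1,2k+1)·x^k`. -/
noncomputable def calQ (m : ℕ) : Polynomial ℚ :=
  ∑ k ∈ Finset.range (m + 1),
    Polynomial.C ((Nat.choose (m + k + 1) (2 * k + 1) : ℚ)) * Polynomial.X ^ k

/-- The Fibonacci polynomials: `F_1 = 1`, `F_2 = x`, `F_{n+1} = x·F_n + F_{n−1}`. -/
noncomputable def fibPoly : ℕ → Polynomial ℚ
  | 0 => 0
  | 1 => 1
  | n + 2 => Polynomial.X * fibPoly (n + 1) + fibPoly n

/-- The Lucas polynomials: `L_0 = 2`, `L_1 = x`, `L_{n+1} = x·L_n + L_{n−1}`. -/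
noncomputable def lucasPoly : ℕ → Polynomial ℚ
  | 0 => 2
  | 1 => Polynomial.X
  | n + 2 => Polynomial.X * lucasPoly (n + 1) + lucasPoly n

theorem aux_coeff_calP (m k : ℕ) : (calP m).coeff k = (Nat.choose (m + k) (2 * k) : ℚ) := by
  unfold calP
  simp only [finsetSum_coeff, coeff_C_mul, coeff_X_pow, mul_ite, mul_one, mul_zero]
  rw [Finset.sum_ite_eq]
  split_ifs with h
  · rfl
  · rw [Finset.mem_range] at h
    rw [Nat.choose_eq_zero_of_lt (by omega)]; simp

theorem aux_coeff_calQ (m k : ℕ) :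
    (calQ m).coeff k = (Nat.choose (m + k + 1) (2 * k + 1) : ℚ) := by
  unfold calQ
  simp only [finsetSum_coeff, coeff_C_mul, coeff_X_pow, mul_ite, mul_one, mul_zero]
  rw [Finset.sum_ite_eq]
  split_ifs with h
  · rfl
  · rw [Finset.mem_range] at h
    rw [Nat.choose_eq_zero_of_lt (by omega)]; simp

theorem aux_calP_succ (m : ℕ) : calP (m + 1) = X * calQ m + calP m := by
  ext k
  cases k with
  | zero => simp [aux_coeff_calP]
  | succ k =>
    rw [coeff_add, coeff_X_mul, aux_coeff_calP, aux_coeff_calP, aux_coeff_calQ]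
    have := Nat.choose_succ_succ (m + k + 1) (2 * k + 1)
    rw [show m + 1 + (k + 1) = (m + k + 1).succ by omega,
      show 2 * (k + 1) = (2 * k + 1).succ by omega,
      show m + (k + 1) = m + k + 1 by omega, this]
    push_cast; ring

theorem aux_calQ_succ (m : ℕ) : calQ (m + 1) = calP (m + 1) + calQ m := by
  ext k
  rw [coeff_add, aux_coeff_calP, aux_coeff_calQ, aux_coeff_calQ]
  have := Nat.choose_succ_succ (m + k + 1) (2 * k)
  rw [show m + 1 + k + 1 = (m + k + 1).succ by omega,
      show 2 * k + 1 = (2 * k).succ by omega,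
      show m + 1 + k = m + k + 1 by omega, this]
  push_cast; ring

theorem aux_fib (m : ℕ) :
    fibPoly (2 * m + 1) = (calP m).comp (X ^ 2) ∧
    fibPoly (2 * m + 2) = X * (calQ m).comp (X ^ 2) := by
  induction m with
  | zero => simp [fibPoly, calP, calQ]
  | succ m ih =>
    obtain ⟨h1, h2⟩ := ih
    have h3 : fibPoly (2 * (m + 1) + 1) = (calP (m + 1)).comp (X ^ 2) := by
      rw [show 2 * (m + 1) + 1 = (2 * m + 1) + 2 by ring, fibPoly, h1, h2, aux_calP_succ]
      simp; ring
    refine ⟨h3, ?_⟩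
    rw [fibPoly, h3, show 2 * (m + 1) = 2 * m + 2 by ring, h2, aux_calQ_succ]
    simp; ring

theorem aux_lucas (n : ℕ) : lucasPoly (n + 1) = fibPoly (n + 2) + fibPoly n ∧
    lucasPoly (n + 2) = fibPoly (n + 3) + fibPoly (n + 1) := by
  induction n with
  | zero =>
    constructor
    · simp [lucasPoly, fibPoly]
    · simp [lucasPoly, fibPoly]; ring
  | succ n ih =>
    refine ⟨ih.2, ?_⟩
    rw [lucasPoly, ih.1, show n + 1 + 1 = n + 2 by rfl, ih.2]
    rw [show fibPoly (n + 1 + 3) = X * fibPoly (n + 3) + fibPoly (n + 2) from rfl,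
      show fibPoly (n + 2) = X * fibPoly (n + 1) + fibPoly n from rfl]
    ring

theorem aux_Ppoly (n : ℕ) : Ppoly (n + 1) = calQ (n + 1) + calQ n := by
  ext k
  rw [coeff_add, aux_coeff_calQ, aux_coeff_calQ]
  unfold Ppoly
  simp only [finsetSum_coeff, coeff_C_mul, coeff_X_pow, mul_ite, mul_one, mul_zero]
  rw [Finset.sum_ite_eq]
  split_ifs with h
  · rw [Finset.mem_range] at h
    obtain ⟨d, hd⟩ : ∃ d, n + 1 = k + d := ⟨n + 1 - k, by omega⟩
    have e1 := Nat.add_one_mul_choose_eq (n + 1 + k) (2 * k)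
    have e2 := Nat.choose_succ_right_eq (n + 1 + k) (2 * k)
    rw [show n + 1 + k - 2 * k = d by omega] at e2
    rw [show n + k + 1 = n + 1 + k by omega]
    have q1 : ((n : ℚ) + 1 + k + 1) * ((n + 1 + k).choose (2 * k) : ℚ)
      = ((n + 1 + k + 1).choose (2 * k + 1) : ℚ) * (2 * k + 1) := by exact_mod_cast e1
    have q2 : ((n + 1 + k).choose (2 * k + 1) : ℚ) * (2 * k + 1)
      = ((n + 1 + k).choose (2 * k) : ℚ) * d := by exact_mod_cast e2
    have q3 : (n : ℚ) + 1 = k + d := by exact_mod_cast hd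
    have hk : (2 * (k : ℚ) + 1) ≠ 0 := by positivity
    rw [div_mul_eq_mul_div, div_eq_iff hk]
    push_cast
    linear_combination q1 - q2 + ((n + 1 + k).choose (2 * k) : ℚ) * q3
  · rw [Finset.mem_range] at h
    rw [Nat.choose_eq_zero_of_lt (by omega), Nat.choose_eq_zero_of_lt (by omega)]; simp

theorem aux_Qpoly (n : ℕ) : Qpoly (n + 1) = calP (n + 1) + calP n := by
  ext k
  rw [coeff_add, aux_coeff_calP, aux_coeff_calP]
  unfold Qpoly
  simp only [coeff_add, finsetSum_coeff, coeff_C_mul, coeff_X_pow, mul_ite, mul_one, mul_zero]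
  rw [Finset.sum_ite_eq, coeff_C]
  cases k with
  | zero => simp; norm_num
  | succ j =>
  rw [if_neg (by omega), zero_add]
  split_ifs with h
  · rw [Finset.mem_Icc] at h
    obtain ⟨d, hd⟩ : ∃ d, n = j + d := ⟨n - j, by omega⟩
    have e1 := Nat.add_one_mul_choose_eq (n + j + 1) (2 * j + 1)
    have e2 := Nat.choose_succ_right_eq (n + j + 1) (2 * j + 1)
    rw [show n + j + 1 - (2 * j + 1) = d by omega] at e2
    rw [show n + 1 + (j + 1) - 1 = n + j + 1 by omega, show 2 * (j + 1) - 1 = 2 * j + 1 by omega,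
      show n + 1 + (j + 1) = n + j + 1 + 1 by omega, show 2 * (j + 1) = 2 * j + 1 + 1 by omega,
      show n + (j + 1) = n + j + 1 by omega]
    have q1 : ((n : ℚ) + j + 1 + 1) * ((n + j + 1).choose (2 * j + 1) : ℚ)
      = ((n + j + 1 + 1).choose (2 * j + 1 + 1) : ℚ) * (2 * j + 1 + 1) := by exact_mod_cast e1
    have q2 : ((n + j + 1).choose (2 * j + 1 + 1) : ℚ) * (2 * j + 1 + 1)
      = ((n + j + 1).choose (2 * j + 1) : ℚ) * d := by exact_mod_cast e2
    have q3 : (n : ℚ) = j + d := by exact_mod_cast hd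
    have hk : ((j + 1 : ℕ) : ℚ) ≠ 0 := by positivity
    rw [div_mul_eq_mul_div, div_eq_iff hk]
    push_cast
    linear_combination (q1 - q2) / 2 + ((n + j + 1).choose (2 * j + 1) : ℚ) * q3 / 2
  · rw [Finset.mem_Icc] at h
    rw [Nat.choose_eq_zero_of_lt (by omega), Nat.choose_eq_zero_of_lt (by omega)]; simp

theorem stmt_1 (m : ℕ) (hm : 0 < m) :
    lucasPoly (2 * m + 1) = Polynomial.X * (Ppoly m).comp (Polynomial.X ^ 2) ∧
    lucasPoly (2 * m) = (Qpoly m).comp (Polynomial.X ^ 2) ∧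
    fibPoly (2 * m + 1) = (calP m).comp (Polynomial.X ^ 2) ∧
    fibPoly (2 * m + 2) = Polynomial.X * (calQ m).comp (Polynomial.X ^ 2) := by
  obtain ⟨n, rfl⟩ : ∃ n, m = n + 1 := ⟨m - 1, by omega⟩
  refine ⟨?_, ?_, aux_fib (n + 1)⟩
  · rw [(aux_lucas (2 * (n + 1))).1, (aux_fib (n + 1)).2, show 2 * (n + 1) = 2 * n + 2 by ring,
      (aux_fib n).2, aux_Ppoly, add_comp, mul_add]
  · rw [show 2 * (n + 1) = 2 * n + 1 + 1 by ring, (aux_lucas (2 * n + 1)).1, (aux_fib n).1,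
      show 2 * n + 1 + 2 = 2 * (n + 1) + 1 by ring, (aux_fib (n + 1)).1, aux_Qpoly, add_comp]
end

section
/- For every positive integer m, the following identities of polynomials with rational coefficients hold: U_{2m}(x) = P_m(4x² − 4) and 2·T_{2m}(x) = Q_m(4x² − 4), where T_n and U_n are the Chebyshev polynomials of the first and second kind. -/
open Polynomial Finset

/-- Morgan–Voyce pair, defined by recursion. -/
noncomputable def mvPair : ℕ → Polynomial ℚ × Polynomial ℚ
  | 0 => (1, 0)
  | m + 1 => ((mvPair m).1 + X * ((mvPair m).2 + (mvPair m).1), (mvPair m).2 + (mvPair m).1)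

lemma mvPair_coeff (m : ℕ) : ∀ k : ℕ,
    (mvPair m).1.coeff k = ((m + k).choose (2 * k) : ℚ) ∧
    (mvPair m).2.coeff k = ((m + k).choose (2 * k + 1) : ℚ) := by
  induction m with
  | zero =>
    intro k
    rcases k with _ | k
    · simp [mvPair]
    · rw [Nat.choose_eq_zero_of_lt (by omega), Nat.choose_eq_zero_of_lt (by omega)]
      simp [mvPair, coeff_one]
  | succ m ih =>
    intro k
    have h2 : ∀ k : ℕ, (mvPair m).2.coeff k + (mvPair m).1.coeff k
        = ((m + 1 + k).choose (2 * k + 1) : ℚ) := by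
      intro k
      rw [(ih k).1, (ih k).2, show m + 1 + k = (m + k) + 1 by ring, Nat.choose_succ_succ]
      push_cast; ring
    refine ⟨?_, by simpa [mvPair] using h2 k⟩
    rcases k with _ | k
    · simp [mvPair, (ih 0).1]
    · simp only [mvPair, coeff_add, coeff_X_mul]
      rw [h2 k, (ih (k+1)).1, show m + 1 + (k + 1) = (m + 1 + k) + 1 by ring,
        show 2 * (k + 1) = (2 * k + 1) + 1 by ring, Nat.choose_succ_succ (m + 1 + k),
        show m + (k + 1) = m + 1 + k by ring]
      push_cast; ring

lemma mvPair_cheb (m : ℕ) :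
    Polynomial.Chebyshev.U ℚ (2 * m) =
      (mvPair m).1.comp (4 * X ^ 2 - 4) + 2 * (mvPair m).2.comp (4 * X ^ 2 - 4) ∧
    Polynomial.Chebyshev.U ℚ (2 * m - 1) = 2 * X * (mvPair m).2.comp (4 * X ^ 2 - 4) := by
  induction m with
  | zero => simp [mvPair]
  | succ m ih =>
    obtain ⟨h1, h2⟩ := ih
    have h3 := Polynomial.Chebyshev.U_add_one ℚ (2 * m)
    have h4 := Polynomial.Chebyshev.U_add_two ℚ (2 * m)
    rw [h1, h2] at h3
    rw [h3, h1] at h4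
    push_cast
    rw [show (2 * ((m : ℤ) + 1)) = 2 * m + 2 by ring,
      show (2 * (m : ℤ) + 2 - 1) = 2 * m + 1 by ring, h3, h4]
    simp only [mvPair, add_comp, mul_comp, X_comp]
    constructor <;> ring

lemma Ppoly_eq (m : ℕ) : Ppoly m = (mvPair m).1 + 2 * (mvPair m).2 := by
  ext k
  rw [show (2 : Polynomial ℚ) = C 2 from rfl]
  simp only [Ppoly, finsetSum_coeff, coeff_X_pow, mul_ite, mul_one, mul_zero, coeff_add, coeff_C_mul,
    (mvPair_coeff m k).1, (mvPair_coeff m k).2]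
  rw [Finset.sum_ite_eq]
  split_ifs with h
  · have hk : k ≤ m := by simpa [Nat.lt_succ_iff] using h
    have := Nat.choose_succ_right_eq (m + k) (2 * k)
    rw [show m + k - 2 * k = m - k by omega] at this
    have h' : ((m + k).choose (2 * k + 1) : ℚ) * (2 * k + 1) = (m + k).choose (2 * k) * (m - k) := by
      rw [← Nat.cast_sub hk]; exact_mod_cast this
    field_simp
    linear_combination -2 * h'
  · have hk : m < k := by simpa using h
    rw [Nat.choose_eq_zero_of_lt (by omega), Nat.choose_eq_zero_of_lt (by omega)]
    simp

lemma Qpoly_eq (m : ℕ) : Qpoly m = 2 * (mvPair m).1 - X * (mvPair m).2 := by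
  ext k
  rw [show (2 : Polynomial ℚ) = C 2 from rfl]
  simp only [Qpoly, finsetSum_coeff, coeff_X_pow, mul_ite, mul_one, mul_zero, coeff_add, coeff_sub, coeff_C_mul,
    (mvPair_coeff m k).1]
  rw [Finset.sum_ite_eq]
  rcases k with _ | k
  · simp
  rw [coeff_X_mul, (mvPair_coeff m k).2, coeff_C_succ]
  split_ifs with h
  · have := Nat.add_one_mul_choose_eq (m + k) (2 * k + 1)
    have h' : ((m : ℚ) + k + 1) * (m + k).choose (2 * k + 1)
        = (m + (k + 1)).choose (2 * (k + 1)) * (2 * k + 1 + 1) := by exact_mod_cast this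
    rw [show m + (k + 1) - 1 = m + k by omega, show 2 * (k + 1) - 1 = 2 * k + 1 by omega]
    push_cast
    field_simp
    linear_combination h'
  · have hk : m < k + 1 := by simpa using h
    rw [Nat.choose_eq_zero_of_lt (by omega), Nat.choose_eq_zero_of_lt (by omega)]
    simp

theorem stmt_2 (m : ℕ) (hm : 0 < m) :
    Polynomial.Chebyshev.U ℚ (2 * m) =
      (Ppoly m).comp (4 * Polynomial.X ^ 2 - 4) ∧
    2 * Polynomial.Chebyshev.T ℚ (2 * m) =
      (Qpoly m).comp (4 * Polynomial.X ^ 2 - 4) := by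
  obtain ⟨h1, h2⟩ := mvPair_cheb m
  refine ⟨by rw [h1, Ppoly_eq]; simp, ?_⟩
  rw [Polynomial.Chebyshev.T_eq_U_sub_X_mul_U, h1, h2, Qpoly_eq]
  simp only [sub_comp, mul_comp, X_comp, ofNat_comp]
  ring
end

section
/- Let m be a positive integer and n = 2m+1, and let θ = 2·cos(2π/n), a real algebraic number. Then the minimal polynomial of θ over ℚ divides the polynomial P_m(x−2) in ℚ[x]; moreover, if n is prime then P_m(x−2) is equal to the minimal polynomial of θ over ℚ. -/
open Polynomial Finset Real

noncomputable def Rp : ℕ → ℤ[X]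
  | 0 => 1
  | 1 => X + 3
  | (m+2) => (X + 2) * Rp (m+1) - Rp m

lemma choose_aux (M j : ℕ) : ((M+2).choose (j+2) : ℤ) =
    2 * (M+1).choose (j+2) + M.choose j - M.choose (j+2) := by
  rw [Nat.choose_succ_succ (M+1) (j+1), Nat.choose_succ_succ M j, Nat.choose_succ_succ M (j+1)]
  push_cast
  ring

lemma Rp_coeff (m : ℕ) : ∀ k, (Rp m).coeff k =
    ((m+k).choose (2*k) : ℤ) + 2 * (m+k).choose (2*k+1) := by
  induction m using Rp.induct with
  | case1 =>
    intro k
    rcases k with _ | k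
    · simp [Rp]
    · rw [Nat.choose_eq_zero_of_lt (by omega), Nat.choose_eq_zero_of_lt (by omega)]
      simp [Rp, coeff_one]
  | case2 =>
    intro k
    have h3 : (3 : ℤ[X]) = C 3 := rfl
    rw [Rp, h3, coeff_add, coeff_X, coeff_C]
    rcases k with _ | _ | k
    · simp
    · simp
    · rw [Nat.choose_eq_zero_of_lt (by omega), Nat.choose_eq_zero_of_lt (by omega)]
      simp
  | case3 m ih1 ih2 =>
    intro k
    have h2 : (2 : ℤ[X]) = C 2 := rfl
    rw [Rp, h2, add_mul, coeff_sub, coeff_add, coeff_C_mul]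
    rcases k with _ | k
    · rw [ih1, ih2]
      simp
      ring
    · rw [coeff_X_mul, ih1, ih2, ih1]
      have e0 := choose_aux (m+k+1) (2*k)
      have e1 := choose_aux (m+k+1) (2*k+1)
      have a1 : m + 2 + (k+1) = m+k+1+2 := by ring
      have a2 : m + 1 + (k+1) = m+k+1+1 := by ring
      have a3 : m + 1 + k = m+k+1 := by ring
      have a4 : m + (k+1) = m+k+1 := by ring
      have a5 : 2 * (k+1) + 1 = 2*k+1+2 := by ring
      have a6 : 2 * (k+1) = 2*k+2 := by ring
      rw [a1, a2, a3, a4, a5, a6, e0, e1]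
      ring

lemma Rp_coeff_mul (m k : ℕ) (hk : k ≤ m) : (2 * k + 1 : ℤ) * (Rp m).coeff k =
    (2*m+1) * (m+k).choose (2*k) := by
  rw [Rp_coeff]
  have h := Nat.choose_succ_right_eq (m+k) (2*k)
  have h' : m + k - 2 * k = m - k := by omega
  rw [h'] at h
  have : ((m+k).choose (2*k+1) : ℤ) * (2*k+1) = (m+k).choose (2*k) * (m - k) := by
    have := congrArg (Nat.cast : ℕ → ℤ) h
    push_cast [Nat.cast_sub hk] at this
    exact this
  linear_combination 2 * this

lemma Rp_coeff_top (m : ℕ) : (Rp m).coeff m = 1 := by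
  rw [Rp_coeff, ← two_mul, Nat.choose_self, Nat.choose_succ_self]; simp

lemma Rp_coeff_gt (m k : ℕ) (h : m < k) : (Rp m).coeff k = 0 := by
  rw [Rp_coeff, Nat.choose_eq_zero_of_lt (by omega), Nat.choose_eq_zero_of_lt (by omega)]; simp

lemma Rp_natDegree (m : ℕ) : (Rp m).natDegree = m := by
  apply le_antisymm
  · exact natDegree_le_iff_coeff_eq_zero.2 (Rp_coeff_gt m)
  · exact le_natDegree_of_ne_zero (by rw [Rp_coeff_top]; exact one_ne_zero)

lemma Rp_monic (m : ℕ) : (Rp m).Monic := by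
  rw [Monic, leadingCoeff, Rp_natDegree, Rp_coeff_top]

lemma Ppoly_eq_s19 (m : ℕ) : Ppoly m = (Rp m).map (algebraMap ℤ ℚ) := by
  ext k
  rw [Ppoly, finsetSum_coeff, coeff_map]
  simp only [coeff_C_mul_X_pow]
  rw [Finset.sum_ite_eq]
  split_ifs with h
  · have hk : k ≤ m := by rw [Finset.mem_range] at h; omega
    have := congrArg (Int.cast : ℤ → ℚ) (Rp_coeff_mul m k hk)
    push_cast at this
    have h0 : (2 * k + 1 : ℚ) ≠ 0 := by positivity
    rw [eq_intCast]
    field_simp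
    linarith
  · rw [Rp_coeff_gt m k (by rw [Finset.mem_range] at h; omega)]; simp

lemma Rp_eval (a : ℝ) (m : ℕ) :
    aeval (2 * Real.cos (2 * a) - 2) (Rp m) * Real.sin a = Real.sin ((2*m+1) * a) := by
  induction m using Rp.induct with
  | case1 => simp [Rp]
  | case2 =>
    have h : (2 * ((1:ℕ):ℝ) + 1) * a = 3 * a := by push_cast; ring
    rw [h, Real.sin_three_mul, Real.cos_two_mul, Real.cos_sq']
    simp only [Rp, map_add, aeval_X, map_ofNat]
    ring
  | case3 m ih1 ih2 =>
    have h1 : (2 * ((m+2:ℕ):ℝ) + 1) * a = (2*((m+1:ℕ):ℝ)+1)*a + 2 * a := by push_cast; ring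
    have h2 : (2 * (m:ℝ) + 1) * a = (2*((m+1:ℕ):ℝ)+1)*a - 2 * a := by push_cast; ring
    rw [h2, Real.sin_sub] at ih2
    rw [h1, Real.sin_add, Rp]
    simp only [map_sub, map_mul, map_add, aeval_X, map_ofNat]
    linear_combination 2 * Real.cos (2*a) * ih1 - ih2

lemma Ppoly_root (m : ℕ) (hm : 0 < m) :
    aeval (2 * Real.cos (2 * Real.pi / (2 * m + 1)) - 2) (Ppoly m) = 0 := by
  have h0 : (0:ℝ) < 2 * m + 1 := by positivity
  have h := Rp_eval (Real.pi / (2*m+1)) m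
  rw [mul_div_cancel₀ _ h0.ne', Real.sin_pi] at h
  have hs : Real.sin (Real.pi / (2*m+1)) ≠ 0 := by
    apply ne_of_gt
    apply Real.sin_pos_of_pos_of_lt_pi
    · positivity
    · apply div_lt_self Real.pi_pos
      have : (0:ℝ) < m := by exact_mod_cast hm
      linarith
  rw [Ppoly_eq_s19, aeval_map_algebraMap, mul_div_assoc]
  exact (mul_eq_zero.1 h).resolve_right hs

lemma Rp_irred (m : ℕ) (hm : 0 < m) (hp : Nat.Prime (2*m+1)) : Irreducible (Rp m) := by
  have hpz : Prime ((2*m+1 : ℕ) : ℤ) := Nat.prime_iff_prime_int.1 hp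
  have hP : (Ideal.span {((2*m+1 : ℕ) : ℤ)}).IsPrime :=
    (Ideal.span_singleton_prime hpz.ne_zero).2 hpz
  apply irreducible_of_eisenstein_criterion hP
  · rw [(Rp_monic m).leadingCoeff]
    exact fun h => hP.ne_top ((Ideal.eq_top_iff_one _).2 h)
  · intro k hk
    rw [degree_eq_natDegree (Rp_monic m).ne_zero, Rp_natDegree] at hk
    have hk' : k < m := by exact_mod_cast hk
    rw [Ideal.mem_span_singleton]
    have h := Rp_coeff_mul m k hk'.le
    have hd : ((2*m+1 : ℕ) : ℤ) ∣ (2 * k + 1 : ℤ) * (Rp m).coeff k :=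
      ⟨_, by rw [h]; push_cast; rfl⟩
    refine (hpz.dvd_or_dvd hd).resolve_left fun hd => ?_
    have := Int.le_of_dvd (by positivity) hd
    push_cast at this
    omega
  · rw [degree_eq_natDegree (Rp_monic m).ne_zero, Rp_natDegree]
    exact_mod_cast hm
  · rw [Ideal.span_singleton_pow, Ideal.mem_span_singleton]
    have : (Rp m).coeff 0 = ((2*m+1 : ℕ) : ℤ) := by
      rw [Rp_coeff]; simp; ring
    rw [this]
    intro hd
    have h2 := Int.le_of_dvd (by positivity) hd
    have : (1:ℤ) ≤ m := by exact_mod_cast hm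
    push_cast at h2
    nlinarith
  · exact (Rp_monic m).isPrimitive

theorem stmt_19 (m : ℕ) (hm : 0 < m) :
    minpoly ℚ (2 * Real.cos (2 * Real.pi / (2 * m + 1))) ∣
      (Ppoly m).comp (Polynomial.X - Polynomial.C 2) ∧
    (Nat.Prime (2 * m + 1) →
      (Ppoly m).comp (Polynomial.X - Polynomial.C 2) =
        minpoly ℚ (2 * Real.cos (2 * Real.pi / (2 * m + 1)))) := by
  have hr := Ppoly_root m hm
  constructor
  · apply minpoly.dvd
    rw [aeval_comp]
    simpa using hr
  · intro hp
    have hmon : (Ppoly m).Monic := by rw [Ppoly_eq_s19]; exact (Rp_monic m).map _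
    have hirr : Irreducible (Ppoly m) := by
      rw [Ppoly_eq_s19]
      exact ((Rp_monic m).irreducible_iff_irreducible_map_fraction_map).1 (Rp_irred m hm hp)
    have h := minpoly.eq_of_irreducible_of_monic hirr hr hmon
    have h2 := minpoly.add_algebraMap (A := ℚ)
      (2 * Real.cos (2 * Real.pi / (2 * m + 1)) - 2) (2:ℚ)
    rw [← h] at h2
    rw [← h2]
    simp
end
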